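/- arXiv:2102.12192 — 3 statements merged into one kernel-verified Lean document; each statement's English description precedes it below -/
import Mathlib

section
/- Let l_1, …, l_N : ℝ^d → ℝ be differentiable and β-smooth (β > 0), let η > 0, and let (θ_t, p_t) be the MR-GD iterates with gradient step size α = 1/β. Suppose (p*, θ*) minimizes Σ_{i=1}^N p_i l_i(θ) over the N-simplex and ℝ^d. Then for every ε > 0 and every integer T ≥ (2β/ε) ( (1/N) Σ_{i=1}^N l_i(θ_0) − Σ_{i=1}^N p*_i l_i(θ*) ), there exists t with 0 ≤ t ≤ T−1 such that ‖Σ_{i=1}^N p_{t,i} ∇l_i(θ_t)‖² ≤ ε. -/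
open Real Finset

/-!
Write `Φ t = ∑ i, p t i * l i (θ t)`. Passing from `θ t` to `θ (t + 1)` with the weights `p t`
fixed is a gradient step of length `1 / β` for the `β`-smooth function `∑ i, p t i * l i`, so it
lowers the weighted loss by at least `‖∑ i, p t i • ∇ l i (θ t)‖ ^ 2 / (2 * β)`. Passing then from
`p t` to `p (t + 1)` shifts mass towards the smaller losses and, by Chebyshev's sum inequality,
cannot increase it. Hence the squared gradient norms telescope against `Φ 0 - Φ T`, and their
average over `t < T` is at most `ε`.
-/

section Smooth

theorem norm_sub_sub_apply_le_of_norm_fderiv_sub_le {E F : Type*} [NormedAddCommGroup E]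
    [NormedSpace ℝ E] [NormedAddCommGroup F] [NormedSpace ℝ F] {f : E → F} {f' : E → E →L[ℝ] F}
    {β : ℝ} {x : E} (hf : ∀ y, HasFDerivAt f (f' y) y) (hf' : ∀ y, ‖f' y - f' x‖ ≤ β * ‖y - x‖)
    (v : E) : ‖f (x + v) - f x - f' x v‖ ≤ β / 2 * ‖v‖ ^ 2 := by
  let remainder (s : ℝ) : F := f (x + s • v) - f x - s • f' x v
  have hasDerivAt_remainder (s : ℝ) : HasDerivAt remainder ((f' (x + s • v) - f' x) v) s := by
    have hline : HasDerivAt (fun s : ℝ ↦ x + s • v) v s := by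
      simpa using ((hasDerivAt_id s).smul_const v).const_add x
    simpa using! (((hf _).comp_hasDerivAt s hline).sub_const (f x)).sub
      ((hasDerivAt_id s).smul_const (f' x v))
  have hasDerivAt_bound (s : ℝ) :
      HasDerivAt (fun s : ℝ ↦ β / 2 * ‖v‖ ^ 2 * s ^ 2) (β * ‖v‖ ^ 2 * s) s :=
    ((hasDerivAt_pow 2 s).const_mul _).congr_deriv (by norm_num; ring)
  have norm_deriv_le (s : ℝ) (hs : 0 ≤ s) : ‖(f' (x + s • v) - f' x) v‖ ≤ β * ‖v‖ ^ 2 * s :=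
    calc ‖(f' (x + s • v) - f' x) v‖ ≤ ‖f' (x + s • v) - f' x‖ * ‖v‖ :=
          ContinuousLinearMap.le_opNorm _ v
      _ ≤ β * ‖x + s • v - x‖ * ‖v‖ := by gcongr; exact hf' _
      _ = β * ‖v‖ ^ 2 * s := by
          rw [add_sub_cancel_left, norm_smul, Real.norm_of_nonneg hs]; ring
  have hfence := image_norm_le_of_norm_deriv_right_le_deriv_boundary (a := 0) (b := 1)
    (fun s _ ↦ (hasDerivAt_remainder s).continuousAt.continuousWithinAt)
    (fun s _ ↦ (hasDerivAt_remainder s).hasDerivWithinAt) (by simp [remainder])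
    hasDerivAt_bound (fun s hs ↦ norm_deriv_le s hs.1)
  simpa [remainder] using hfence (Set.right_mem_Icc.2 zero_le_one)

theorem norm_sum_smul_le_of_mem_stdSimplex {ι E : Type*} [Fintype ι] [SeminormedAddCommGroup E]
    [NormedSpace ℝ E] {w : ι → ℝ} (hw : w ∈ stdSimplex ℝ ι) {u : ι → E} {r : ℝ}
    (hu : ∀ i, ‖u i‖ ≤ r) : ‖∑ i, w i • u i‖ ≤ r := by
  simpa using (convex_closedBall (0 : E) r).sum_mem (fun i _ ↦ hw.1 i) hw.2
    (fun i _ ↦ mem_closedBall_zero_iff.2 (hu i))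

variable {E : Type*} [NormedAddCommGroup E] [InnerProductSpace ℝ E] [CompleteSpace E]

theorem hasGradientAt_sum_mul {ι : Type*} {s : Finset ι} {f : ι → E → ℝ} {g : ι → E} {x : E}
    (w : ι → ℝ) (hf : ∀ i ∈ s, HasGradientAt (f i) (g i) x) :
    HasGradientAt (fun y ↦ ∑ i ∈ s, w i * f i y) (∑ i ∈ s, w i • g i) x := by
  rw [hasGradientAt_iff_hasFDerivAt]
  simpa using HasFDerivAt.fun_sum fun i hi ↦ (hf i hi).hasFDerivAt.const_mul (w i)

theorem le_add_inner_add_of_norm_gradient_sub_le {f : E → ℝ} {g : E → E} {β : ℝ} {x : E}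
    (hf : ∀ y, HasGradientAt f (g y) y) (hg : ∀ y, ‖g y - g x‖ ≤ β * ‖y - x‖) (v : E) :
    f (x + v) ≤ f x + inner ℝ (g x) v + β / 2 * ‖v‖ ^ 2 := by
  have htaylor := norm_sub_sub_apply_le_of_norm_fderiv_sub_le (β := β) (x := x)
    (fun y ↦ (hf y).hasFDerivAt)
    (fun y ↦ by rw [← map_sub, LinearIsometryEquiv.norm_map]; exact hg y) v
  rw [InnerProductSpace.toDual_apply_apply] at htaylor
  linarith [Real.le_norm_self (f (x + v) - f x - inner ℝ (g x) v)]

theorem gradient_step_le_of_norm_gradient_sub_le {f : E → ℝ} {g : E → E} {β : ℝ} {x : E}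
    (hβ : 0 < β) (hf : ∀ y, HasGradientAt f (g y) y) (hg : ∀ y, ‖g y - g x‖ ≤ β * ‖y - x‖) :
    f (x - (1 / β) • g x) ≤ f x - 1 / (2 * β) * ‖g x‖ ^ 2 :=
  calc f (x - (1 / β) • g x) = f (x + -(1 / β) • g x) := by rw [neg_smul, sub_eq_add_neg]
    _ ≤ f x + inner ℝ (g x) (-(1 / β) • g x) + β / 2 * ‖-(1 / β) • g x‖ ^ 2 :=
        le_add_inner_add_of_norm_gradient_sub_le hf hg _
    _ = f x - 1 / (2 * β) * ‖g x‖ ^ 2 := by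
        rw [real_inner_smul_right, real_inner_self_eq_norm_sq, norm_smul, mul_pow,
          Real.norm_eq_abs, sq_abs]
        field_simp
        ring

theorem weighted_gradient_step_le {ι : Type*} [Fintype ι] {l : ι → E → ℝ} {β : ℝ} {x : E}
    {w : ι → ℝ} (hβ : 0 < β) (hw : w ∈ stdSimplex ℝ ι) (hl : ∀ i, Differentiable ℝ (l i))
    (hl' : ∀ i y, ‖gradient (l i) y - gradient (l i) x‖ ≤ β * ‖y - x‖) :
    ∑ i, w i * l i (x - (1 / β) • ∑ i, w i • gradient (l i) x) ≤
      ∑ i, w i * l i x - 1 / (2 * β) * ‖∑ i, w i • gradient (l i) x‖ ^ 2 := by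
  refine gradient_step_le_of_norm_gradient_sub_le (f := fun y ↦ ∑ i, w i * l i y)
    (g := fun y ↦ ∑ i, w i • gradient (l i) y) hβ
    (fun y ↦ hasGradientAt_sum_mul w fun i _ ↦ (hl i y).hasGradientAt) fun y ↦ ?_
  simp_rw [← sum_sub_distrib, ← smul_sub]
  exact norm_sum_smul_le_of_mem_stdSimplex hw fun i ↦ hl' i y

end Smooth

theorem sum_mul_sum_mul_mul_le_of_antivary {ι R : Type*} [Fintype ι] [CommRing R] [LinearOrder R]
    [IsStrictOrderedRing R] {f g w : ι → R} (hfg : Antivary f g) (hw : ∀ i, 0 ≤ w i) :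
    (∑ i, w i) * ∑ i, w i * f i * g i ≤ (∑ i, w i * f i) * ∑ i, w i * g i := by
  have hnonpos : ∑ i, ∑ j, w i * w j * ((f j - f i) * (g j - g i)) ≤ 0 :=
    sum_nonpos fun i _ ↦ sum_nonpos fun j _ ↦ mul_nonpos_of_nonneg_of_nonpos
      (mul_nonneg (hw i) (hw j)) (antivary_iff_forall_mul_nonpos.1 hfg i j)
  have hexpand : ∑ i, ∑ j, w i * w j * ((f j - f i) * (g j - g i)) =
      2 * ((∑ i, w i) * ∑ i, w i * f i * g i - (∑ i, w i * f i) * ∑ i, w i * g i) :=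
    calc _ = ∑ i, ∑ j, (w i * (w j * f j * g j) - w i * f i * (w j * g j)
              - w i * g i * (w j * f j) + w i * f i * g i * w j) := by
          congr! 2; ring
      _ = _ := by
          simp only [sum_add_distrib, sum_sub_distrib, ← mul_sum, ← sum_mul]
          ring
  linarith

theorem exists_lt_le_of_forall_le_sub_succ {G : Type*} [AddCommGroup G] [LinearOrder G]
    [IsOrderedAddMonoid G] {Φ r : ℕ → G} {δ : G} {T : ℕ} (hr : ∀ t, r t ≤ Φ t - Φ (t + 1))
    (hT : 0 < T) (hΦ : Φ 0 - Φ T ≤ T • δ) : ∃ t < T, r t ≤ δ := by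
  have hsum : ∑ t ∈ range T, r t ≤ ∑ _t ∈ range T, δ :=
    calc ∑ t ∈ range T, r t ≤ ∑ t ∈ range T, (Φ t - Φ (t + 1)) := sum_le_sum fun t _ ↦ hr t
      _ = Φ 0 - Φ T := sum_range_sub' Φ T
      _ ≤ ∑ _t ∈ range T, δ := by simpa using hΦ
  simpa using exists_le_of_sum_le (nonempty_range_iff.2 hT.ne') hsum

section ExpWeight

theorem antivary_exp_neg_mul {ι : Type*} {η : ℝ} (hη : 0 ≤ η) (b : ι → ℝ) :
    Antivary (fun i ↦ exp (-η * b i)) b := fun _ _ hij ↦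
  exp_le_exp.2 (mul_le_mul_of_nonpos_left hij.le (neg_nonpos.2 hη))

variable {ι : Type*} [Fintype ι]

/-- The exponential (multiplicative-weights) distribution on `ι` with step size `η` for the
cumulative losses `a`. -/
noncomputable def expWeight (η : ℝ) (a : ι → ℝ) (i : ι) : ℝ :=
  exp (-η * a i) / ∑ j, exp (-η * a j)

theorem expWeight_mem_stdSimplex [Nonempty ι] (η : ℝ) (a : ι → ℝ) :
    expWeight η a ∈ stdSimplex ℝ ι := by
  have hpos : 0 < ∑ j, exp (-η * a j) := sum_pos (fun j _ ↦ exp_pos _) univ_nonempty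
  refine ⟨fun i ↦ div_nonneg (exp_pos _).le hpos.le, ?_⟩
  simp only [expWeight, ← sum_div, div_self hpos.ne']

theorem sum_expWeight_mul (η : ℝ) (a b : ι → ℝ) :
    ∑ i, expWeight η a i * b i = (∑ i, exp (-η * a i) * b i) / ∑ i, exp (-η * a i) := by
  simp only [expWeight, div_mul_eq_mul_div, sum_div]

theorem sum_expWeight_add_mul_le [Nonempty ι] {η : ℝ} (hη : 0 ≤ η) (a b : ι → ℝ) :
    ∑ i, expWeight η (a + b) i * b i ≤ ∑ i, expWeight η a i * b i := by
  have hpos (c : ι → ℝ) : 0 < ∑ i, exp (-η * c i) := sum_pos (fun i _ ↦ exp_pos _) univ_nonempty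
  have hadd (i : ι) : exp (-η * (a + b) i) = exp (-η * a i) * exp (-η * b i) := by
    rw [Pi.add_apply, mul_add, exp_add]
  rw [sum_expWeight_mul, sum_expWeight_mul, div_le_div_iff₀ (hpos _) (hpos _)]
  simp only [hadd]
  linarith [sum_mul_sum_mul_mul_le_of_antivary (antivary_exp_neg_mul hη b)
    fun i ↦ (exp_pos (-η * a i)).le]

end ExpWeight

section MRGD

variable {ι E : Type*} [Fintype ι] [NormedAddCommGroup E] [InnerProductSpace ℝ E] [CompleteSpace E]

/-- `IsMRGD α η l θ p` says that `(θ t, p t)` are the iterates of MR-GD for the losses `l`, with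
gradient step size `α` and multiplicative-weights step size `η`. The cumulative losses that define
`p t` start at `θ 1`, so that `p 0` is uniform. -/
structure IsMRGD (α η : ℝ) (l : ι → E → ℝ) (θ : ℕ → E) (p : ℕ → ι → ℝ) : Prop where
  weight_zero : ∀ i, p 0 i = 1 / Fintype.card ι
  iterate_succ : ∀ t, θ (t + 1) = θ t - α • ∑ i, p t i • gradient (l i) (θ t)
  weight_succ : ∀ t i, p (t + 1) i = exp (-η * ∑ s ∈ Icc 1 (t + 1), l i (θ s)) /
    ∑ j, exp (-η * ∑ s ∈ Icc 1 (t + 1), l j (θ s))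

namespace IsMRGD

variable {α β η : ℝ} {l : ι → E → ℝ} {θ : ℕ → E} {p : ℕ → ι → ℝ}

theorem weight_eq_expWeight (h : IsMRGD α η l θ p) (t : ℕ) :
    p t = expWeight η (∑ s ∈ Icc 1 t, fun i ↦ l i (θ s)) := by
  funext i
  cases t with
  | zero => simp [expWeight, h.weight_zero]
  | succ t => simp [expWeight, h.weight_succ]

theorem weight_mem_stdSimplex [Nonempty ι] (h : IsMRGD α η l θ p) (t : ℕ) :
    p t ∈ stdSimplex ℝ ι :=
  h.weight_eq_expWeight t ▸ expWeight_mem_stdSimplex η _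

theorem sum_weight_succ_mul_le [Nonempty ι] (h : IsMRGD α η l θ p) (hη : 0 ≤ η) (t : ℕ) :
    ∑ i, p (t + 1) i * l i (θ (t + 1)) ≤ ∑ i, p t i * l i (θ (t + 1)) := by
  rw [h.weight_eq_expWeight t, h.weight_eq_expWeight (t + 1), sum_Icc_succ_top (by lia)]
  exact sum_expWeight_add_mul_le hη _ _

theorem norm_sq_le_sub_succ [Nonempty ι] (h : IsMRGD (1 / β) η l θ p) (hβ : 0 < β)
    (hη : 0 ≤ η) (hdiff : ∀ i, Differentiable ℝ (l i))
    (hsmooth : ∀ i x y, ‖gradient (l i) x - gradient (l i) y‖ ≤ β * ‖x - y‖) (t : ℕ) :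
    1 / (2 * β) * ‖∑ i, p t i • gradient (l i) (θ t)‖ ^ 2 ≤
      ∑ i, p t i * l i (θ t) - ∑ i, p (t + 1) i * l i (θ (t + 1)) := by
  have hstep := weighted_gradient_step_le (x := θ t) hβ (h.weight_mem_stdSimplex t) hdiff
    fun i y ↦ hsmooth i y (θ t)
  rw [← h.iterate_succ] at hstep
  linarith [h.sum_weight_succ_mul_le hη t]

end IsMRGD

theorem mr_gd_convergence_corollary_general [Nonempty ι] {l : ι → E → ℝ} {β η : ℝ} (hβ : 0 < β)
    (hη : 0 ≤ η) (hdiff : ∀ i, Differentiable ℝ (l i))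
    (hsmooth : ∀ i x y, ‖gradient (l i) x - gradient (l i) y‖ ≤ β * ‖x - y‖)
    {θ : ℕ → E} {p : ℕ → ι → ℝ} (h : IsMRGD (1 / β) η l θ p) {m : ℝ}
    (hm : ∀ q ∈ stdSimplex ℝ ι, ∀ x, m ≤ ∑ i, q i * l i x) {ε : ℝ} (hε : 0 < ε) {T : ℕ}
    (hT : 0 < T) (hTε : 2 * β / ε * ((1 / Fintype.card ι) * ∑ i, l i (θ 0) - m) ≤ T) :
    ∃ t < T, ‖∑ i, p t i • gradient (l i) (θ t)‖ ^ 2 ≤ ε := by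
  have hinit : ∑ i, p 0 i * l i (θ 0) = (1 / Fintype.card ι) * ∑ i, l i (θ 0) := by
    simp only [h.weight_zero, mul_sum]
  have hbudget : (1 / Fintype.card ι) * ∑ i, l i (θ 0) - m ≤ T • (1 / (2 * β) * ε) := by
    rw [nsmul_eq_mul]
    field_simp at hTε ⊢
    linarith
  obtain ⟨t, htT, ht⟩ := exists_lt_le_of_forall_le_sub_succ
    (Φ := fun t ↦ ∑ i, p t i * l i (θ t)) (h.norm_sq_le_sub_succ hβ hη hdiff hsmooth) hT
    (by linarith [hm (p T) (h.weight_mem_stdSimplex T) (θ T)])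
  exact ⟨t, htT, le_of_mul_le_mul_left ht (by positivity)⟩

end MRGD

/-- Corollary of the convergence theorem: after
T ≥ (2β/ε)((1/N)Σ l_i(θ_0) − Σ p*_i l_i(θ*)) iterations of MR-GD there is an
iterate 0 ≤ t ≤ T−1 whose weighted gradient has squared norm at most ε. -/
theorem mr_gd_convergence_corollary
    {N d : ℕ} (hN : 1 ≤ N) (hd : 1 ≤ d)
    (l : Fin N → EuclideanSpace ℝ (Fin d) → ℝ)
    (β η : ℝ) (hβ : 0 < β) (hη : 0 < η)
    (hdiff : ∀ i, Differentiable ℝ (l i))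
    (hsmooth : ∀ i, ∀ x y : EuclideanSpace ℝ (Fin d),
      ‖gradient (l i) x - gradient (l i) y‖ ≤ β * ‖x - y‖)
    (θ : ℕ → EuclideanSpace ℝ (Fin d)) (p : ℕ → Fin N → ℝ)
    (hp0 : ∀ i, p 0 i = 1 / N)
    (hθ : ∀ t, θ (t + 1) = θ t - (1 / β) • ∑ i, p t i • gradient (l i) (θ t))
    (hp : ∀ t i, p (t + 1) i =
      Real.exp (-η * ∑ s ∈ Finset.Icc 1 (t + 1), l i (θ s)) /
        ∑ j, Real.exp (-η * ∑ s ∈ Finset.Icc 1 (t + 1), l j (θ s)))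
    (pstar : Fin N → ℝ) (θstar : EuclideanSpace ℝ (Fin d))
    (hpstar_nonneg : ∀ i, 0 ≤ pstar i) (hpstar_sum : ∑ i, pstar i = 1)
    (hmin : ∀ (q : Fin N → ℝ) (ϑ : EuclideanSpace ℝ (Fin d)),
      (∀ i, 0 ≤ q i) → (∑ i, q i = 1) →
      ∑ i, pstar i * l i θstar ≤ ∑ i, q i * l i ϑ)
    (ε : ℝ) (hε : 0 < ε)
    (T : ℕ) (hT1 : 1 ≤ T)
    (hT : (2 * β / ε) * ((1 / N) * ∑ i, l i (θ 0) - ∑ i, pstar i * l i θstar) ≤ T) :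
    ∃ t < T, ‖∑ i, p t i • gradient (l i) (θ t)‖ ^ 2 ≤ ε := by
  have : Nonempty (Fin N) := ⟨⟨0, hN⟩⟩
  exact mr_gd_convergence_corollary_general hβ hη.le hdiff hsmooth
    ⟨by simpa using hp0, hθ, hp⟩ (fun q hq x ↦ hmin q x hq.1 hq.2) hε hT1 (by simpa using hT)
end

section
/- Let l_1, …, l_N : ℝ^d → ℝ each be differentiable, β-smooth, G-Lipschitz, and satisfy 0 ≤ l_i(θ) ≤ B for all θ. Fix η > 0, T ≥ 1 and set α = sqrt(2B/(G²βT)). Consider the stochastic MR-SGD process: θ_0 ∈ ℝ^d, p_0 uniform; given a realized index sequence i_0, …, i_{t−1}, set θ_{t+1} = θ_t − α ∇l_{i_t}(θ_t), p_{t+1,j} = exp(−η Σ_{s=1}^{t+1} l_j(θ_s)) / Σ_{k=1}^N exp(−η Σ_{s=1}^{t+1} l_k(θ_s)), and sample i_t from the distribution p_t over {1,…,N}. Let F(θ, p) = Σ_{j=1}^N p_j l_j(θ) and let ∇F(θ_t, p_t) = Σ_{j=1}^N p_{t,j} ∇l_j(θ_t). Then (1/T) Σ_{t=0}^{T−1}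 E‖∇F(θ_t, p_t)‖² ≤ G · sqrt(2βB/T), where the expectation over the indices i_0, …, i_{t−1} is the finite sum over all sequences (i_0, …, i_{t−1}) ∈ {1,…,N}^t weighted by the product Π_{s=0}^{t−1} p_{s, i_s} (each p_s being determined by the preceding indices). -/
open Real Finset

/-- Extend a finite index sequence `s : Fin t → Fin N` to an infinite sequence
`ℕ → Fin N`, padding with the index `0`. -/
def padSeq {N : ℕ} (hN : 0 < N) {t : ℕ} (s : Fin t → Fin N) : ℕ → Fin N :=
  fun n => if h : n < t then s ⟨n, h⟩ else ⟨0, hN⟩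

/-!
The Lyapunov function is the mixed loss `F(θₜ, pₜ) = ∑ⱼ pₜⱼ lⱼ(θₜ)`. For fixed weights, a gradient
step along `∇lᵢ` with `i ∼ p` is an unbiased stochastic gradient step for the smooth function
`F(·, p)`, so by the descent lemma it lowers `F` by `α‖∇F‖²` in expectation, up to `β(αG)²/2`.
Passing from `pₜ` to `pₜ₊₁` reweights by a decreasing function of the current losses, which by
Chebyshev's sum inequality can only lower `F` further. Telescoping gives
`α ∑ₜ E‖∇F‖² ≤ B + Tβ(αG)²/2`, and the chosen `α` makes the two terms on the right equal.
-/

section Chebyshev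

variable {ι R : Type*} [CommRing R] [LinearOrder R] [IsStrictOrderedRing R]

lemma sum_mul_sum_mul_mul_le_of_antivaryOn {s : Finset ι} {w f g : ι → R}
    (hw : ∀ i ∈ s, 0 ≤ w i) (hfg : AntivaryOn f g s) :
    (∑ i ∈ s, w i) * ∑ i ∈ s, w i * (f i * g i) ≤
      (∑ i ∈ s, w i * f i) * ∑ i ∈ s, w i * g i := by
  have pairs_nonpos : ∑ i ∈ s, ∑ j ∈ s, w i * w j * ((f j - f i) * (g j - g i)) ≤ 0 :=
    sum_nonpos fun i hi => sum_nonpos fun j hj =>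
      mul_nonpos_of_nonneg_of_nonpos (mul_nonneg (hw i hi) (hw j hj))
        (hfg.sub_mul_sub_nonpos hi hj)
  have pairs_eq : ∑ i ∈ s, ∑ j ∈ s, w i * w j * ((f j - f i) * (g j - g i)) =
      (∑ i ∈ s, w i) * (∑ j ∈ s, w j * (f j * g j)) +
        (∑ i ∈ s, w i * (f i * g i)) * (∑ j ∈ s, w j) -
        (∑ i ∈ s, w i * f i) * (∑ j ∈ s, w j * g j) -
        (∑ i ∈ s, w i * g i) * (∑ j ∈ s, w j * f j) := by
    simp only [sum_mul_sum, ← sum_sub_distrib, ← sum_add_distrib]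
    exact sum_congr rfl fun i _ => sum_congr rfl fun j _ => by ring
  linarith

end Chebyshev

section GibbsWeights

variable {ι : Type*} [Fintype ι]

/-- The Gibbs (softmax) weights at inverse temperature `η` of the cumulative losses `L`; these are
the multiplicative weights with step size `η` started from the uniform distribution. -/
noncomputable def gibbsWeights (η : ℝ) (L : ι → ℝ) (j : ι) : ℝ :=
  exp (-η * L j) / ∑ k, exp (-η * L k)

variable [Nonempty ι]

lemma gibbsWeights_mem_stdSimplex (η : ℝ) (L : ι → ℝ) : gibbsWeights η L ∈ stdSimplex ℝ ι := by
  have partition_pos : 0 < ∑ k, exp (-η * L k) := sum_pos (fun _ _ => exp_pos _) univ_nonempty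
  refine ⟨fun j => div_nonneg (exp_pos _).le partition_pos.le, ?_⟩
  simp only [gibbsWeights]
  rw [← sum_div, div_self partition_pos.ne']

lemma sum_gibbsWeights_add_mul_le {η : ℝ} (hη : 0 ≤ η) (L a : ι → ℝ) :
    ∑ j, gibbsWeights η (L + a) j * a j ≤ ∑ j, gibbsWeights η L j * a j := by
  have antivary : Antivary (fun j => exp (-η * a j)) a :=
    (monovary_self a).comp_antitone_left fun x y hxy =>
      exp_le_exp.2 (mul_le_mul_of_nonpos_left hxy (neg_nonpos.2 hη))
  have chebyshev := sum_mul_sum_mul_mul_le_of_antivaryOn (s := univ)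
    (fun j _ => (exp_pos (-η * L j)).le) (antivary.antivaryOn _)
  simp only [gibbsWeights, Pi.add_apply, mul_add, exp_add, div_mul_eq_mul_div, ← sum_div]
  rw [div_le_div_iff₀ (sum_pos (fun _ _ => by positivity) univ_nonempty)
    (sum_pos (fun _ _ => exp_pos _) univ_nonempty)]
  simp only [mul_assoc]
  linarith

end GibbsWeights

section Smooth

variable {E : Type*} [NormedAddCommGroup E] [InnerProductSpace ℝ E] [CompleteSpace E]

lemma norm_gradient_le_of_lipschitz {f : E → ℝ} {G : ℝ} (hG : 0 ≤ G)
    (hf : ∀ x y, |f x - f y| ≤ G * ‖x - y‖) (x : E) : ‖gradient f x‖ ≤ G := by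
  rw [gradient, LinearIsometryEquiv.norm_map]
  exact norm_fderiv_le_of_lip' ℝ hG (.of_forall fun y => hf y x)

lemma le_add_inner_gradient_add_of_gradient_lipschitz {f : E → ℝ} {β : ℝ}
    (hf : Differentiable ℝ f)
    (hβ : ∀ x y, ‖gradient f x - gradient f y‖ ≤ β * ‖x - y‖) (x v : E) :
    f (x + v) ≤ f x + inner ℝ (gradient f x) v + β / 2 * ‖v‖ ^ 2 := by
  let φ : ℝ → ℝ := fun t => f (x + t • v) - t * inner ℝ (gradient f x) v - β / 2 * ‖v‖ ^ 2 * t ^ 2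
  have hφ (t : ℝ) : HasDerivAt φ
      (inner ℝ (gradient f (x + t • v) - gradient f x) v - β * ‖v‖ ^ 2 * t) t := by
    have line : HasDerivAt (fun t : ℝ => x + t • v) v t := by
      simpa using ((hasDerivAt_id t).smul_const v).const_add x
    have f_line := (hf (x + t • v)).hasGradientAt.hasFDerivAt.comp_hasDerivAt t line
    refine ((f_line.sub ((hasDerivAt_id t).mul_const _)).sub
      ((hasDerivAt_pow 2 t).const_mul (β / 2 * ‖v‖ ^ 2))).congr_deriv ?_
    rw [InnerProductSpace.toDual_apply_apply, inner_sub_left]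
    push_cast
    ring
  have deriv_nonpos : ∀ t ∈ interior (Set.Icc (0 : ℝ) 1), deriv φ t ≤ 0 := by
    intro t ht
    rw [interior_Icc] at ht
    rw [(hφ t).deriv, sub_nonpos]
    calc inner ℝ (gradient f (x + t • v) - gradient f x) v
        ≤ ‖gradient f (x + t • v) - gradient f x‖ * ‖v‖ := real_inner_le_norm _ _
      _ ≤ β * ‖x + t • v - x‖ * ‖v‖ := by gcongr; exact hβ _ _
      _ = β * ‖v‖ ^ 2 * t := by
        rw [add_sub_cancel_left, norm_smul, norm_of_nonneg ht.1.le]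
        ring
  have antitone : AntitoneOn φ (Set.Icc 0 1) :=
    antitoneOn_of_deriv_nonpos (convex_Icc 0 1)
      (fun t _ => (hφ t).continuousAt.continuousWithinAt)
      (fun t _ => (hφ t).differentiableAt.differentiableWithinAt) deriv_nonpos
  have φ_one_le := antitone (Set.left_mem_Icc.2 zero_le_one) (Set.right_mem_Icc.2 zero_le_one)
    zero_le_one
  simp only [φ, zero_smul, add_zero, one_smul] at φ_one_le
  linarith

end Smooth

section MixedLoss

variable {ι E : Type*} [Fintype ι]

/-- The mixed loss `F(x, p) = ∑ⱼ pⱼ lⱼ(x)` of a family of losses `l` under the weights `p`. -/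
def mixedLoss (l : ι → E → ℝ) (p : ι → ℝ) (x : E) : ℝ :=
  ∑ j, p j * l j x

lemma mixedLoss_nonneg {l : ι → E → ℝ} {p : ι → ℝ} {x : E} (hp : ∀ j, 0 ≤ p j)
    (hl : ∀ j, 0 ≤ l j x) : 0 ≤ mixedLoss l p x :=
  sum_nonneg fun j _ => mul_nonneg (hp j) (hl j)

lemma mixedLoss_le {l : ι → E → ℝ} {p : ι → ℝ} {x : E} {B : ℝ} (hp : p ∈ stdSimplex ℝ ι)
    (hl : ∀ j, l j x ≤ B) : mixedLoss l p x ≤ B :=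
  calc ∑ j, p j * l j x ≤ ∑ j, p j * B :=
        sum_le_sum fun j _ => mul_le_mul_of_nonneg_left (hl j) (hp.1 j)
    _ = B := by rw [← sum_mul, hp.2, one_mul]

variable [NormedAddCommGroup E] [InnerProductSpace ℝ E] [CompleteSpace E]
  {l : ι → E → ℝ} {p : ι → ℝ}

lemma hasGradientAt_mixedLoss {x : E} (hl : ∀ j, DifferentiableAt ℝ (l j) x) :
    HasGradientAt (mixedLoss l p) (∑ j, p j • gradient (l j) x) x := by
  rw [hasGradientAt_iff_hasFDerivAt, map_sum]
  simp only [map_smul]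
  exact HasFDerivAt.fun_sum fun j _ => (hl j).hasGradientAt.hasFDerivAt.const_mul (p j)

lemma gradient_mixedLoss {x : E} (hl : ∀ j, DifferentiableAt ℝ (l j) x) :
    gradient (mixedLoss l p) x = ∑ j, p j • gradient (l j) x :=
  (hasGradientAt_mixedLoss hl).gradient

lemma norm_gradient_mixedLoss_sub_le {β : ℝ} (hp : p ∈ stdSimplex ℝ ι)
    (hdiff : ∀ j, Differentiable ℝ (l j))
    (hsmooth : ∀ j x y, ‖gradient (l j) x - gradient (l j) y‖ ≤ β * ‖x - y‖) (x y : E) :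
    ‖gradient (mixedLoss l p) x - gradient (mixedLoss l p) y‖ ≤ β * ‖x - y‖ := by
  rw [gradient_mixedLoss fun j => hdiff j x, gradient_mixedLoss fun j => hdiff j y,
    ← sum_sub_distrib]
  calc ‖∑ j, (p j • gradient (l j) x - p j • gradient (l j) y)‖
      ≤ ∑ j, p j * (β * ‖x - y‖) := norm_sum_le_of_le _ fun j _ => by
        rw [← smul_sub, norm_smul, norm_of_nonneg (hp.1 j)]
        exact mul_le_mul_of_nonneg_left (hsmooth j x y) (hp.1 j)
    _ = β * ‖x - y‖ := by rw [← sum_mul, hp.2, one_mul]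

lemma sum_mul_mixedLoss_sub_smul_gradient_le {β G : ℝ} (hβ : 0 ≤ β) (hp : p ∈ stdSimplex ℝ ι)
    (hdiff : ∀ j, Differentiable ℝ (l j))
    (hsmooth : ∀ j x y, ‖gradient (l j) x - gradient (l j) y‖ ≤ β * ‖x - y‖) {x : E}
    (hgrad : ∀ j, ‖gradient (l j) x‖ ≤ G) (α : ℝ) :
    ∑ i, p i * mixedLoss l p (x - α • gradient (l i) x) ≤
      mixedLoss l p x - α * ‖gradient (mixedLoss l p) x‖ ^ 2 + β / 2 * (α ^ 2 * G ^ 2) := by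
  set g := gradient (mixedLoss l p) x with hg
  have descent (i : ι) : mixedLoss l p (x - α • gradient (l i) x) ≤
      mixedLoss l p x - α * inner ℝ g (gradient (l i) x) + β / 2 * (α ^ 2 * G ^ 2) := by
    have smooth_step := le_add_inner_gradient_add_of_gradient_lipschitz
      (fun y => (hasGradientAt_mixedLoss fun j => hdiff j y).differentiableAt)
      (norm_gradient_mixedLoss_sub_le hp hdiff hsmooth) x (-(α • gradient (l i) x))
    have norm_step_sq : ‖α • gradient (l i) x‖ ^ 2 ≤ α ^ 2 * G ^ 2 := by
      rw [norm_smul, mul_pow, norm_eq_abs, sq_abs]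
      gcongr
      exact hgrad i
    rw [← sub_eq_add_neg, inner_neg_right, inner_smul_right, norm_neg] at smooth_step
    linarith [mul_le_mul_of_nonneg_left norm_step_sq (by positivity : 0 ≤ β / 2)]
  have unbiased : ∑ i, p i * inner ℝ g (gradient (l i) x) = ‖g‖ ^ 2 := by
    simp only [← inner_smul_right, ← inner_sum]
    rw [← gradient_mixedLoss fun j => hdiff j x, ← hg, real_inner_self_eq_norm_sq]
  calc ∑ i, p i * mixedLoss l p (x - α • gradient (l i) x)
      ≤ ∑ i, p i * (mixedLoss l p x - α * inner ℝ g (gradient (l i) x) +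
          β / 2 * (α ^ 2 * G ^ 2)) :=
        sum_le_sum fun i _ => mul_le_mul_of_nonneg_left (descent i) (hp.1 i)
    _ = (∑ i, p i) * (mixedLoss l p x + β / 2 * (α ^ 2 * G ^ 2)) -
          α * ∑ i, p i * inner ℝ g (gradient (l i) x) := by
        rw [sum_mul, mul_sum, ← sum_sub_distrib]
        exact sum_congr rfl fun i _ => by ring
    _ = mixedLoss l p x - α * ‖g‖ ^ 2 + β / 2 * (α ^ 2 * G ^ 2) := by
        rw [hp.2, unbiased]
        ring

end MixedLoss

section PathExpectation

variable {N : ℕ} (hN : 0 < N)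

lemma padSeq_snoc {t : ℕ} (s : Fin t → Fin N) (j : Fin N) :
    padSeq hN (Fin.snoc s j : Fin (t + 1) → Fin N) = Function.update (padSeq hN s) t j := by
  funext n
  rcases lt_trichotomy n t with h | rfl | h
  · simp [padSeq, Fin.snoc, h, h.ne, h.trans t.lt_succ_self]
  · simp [padSeq, Fin.snoc]
  · simp [padSeq, h.ne', h.not_gt, Nat.not_lt.2 (Nat.succ_le_of_lt h)]

/-- The expectation over the first `t` indices, where the index at time `k` is drawn from `P k ω`.
A function of infinite index sequences is evaluated on the zero-padded finite ones, so the value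
is meaningful for functions of the first `t` indices. -/
def pathExpectation (P : ℕ → (ℕ → Fin N) → Fin N → ℝ) (t : ℕ) :
    ((ℕ → Fin N) → ℝ) →ₗ[ℝ] ℝ where
  toFun X := ∑ s : Fin t → Fin N, (∏ k : Fin t, P k (padSeq hN s) (s k)) * X (padSeq hN s)
  map_add' X Y := by simp only [Pi.add_apply, mul_add, sum_add_distrib]
  map_smul' c X := by
    simp only [Pi.smul_apply, smul_eq_mul, mul_sum, mul_left_comm, RingHom.id_apply]

variable {P : ℕ → (ℕ → Fin N) → Fin N → ℝ}

lemma pathExpectation_zero (X : (ℕ → Fin N) → ℝ) :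
    pathExpectation hN P 0 X = X (padSeq hN (t := 0) default) := by
  simp [pathExpectation]

lemma pathExpectation_succ (hP : ∀ t, DependsOn (P t) (Set.Iio t)) (t : ℕ)
    (X : (ℕ → Fin N) → ℝ) :
    pathExpectation hN P (t + 1) X =
      pathExpectation hN P t fun ω => ∑ i, P t ω i * X (Function.update ω t i) := by
  have update_eq {k : ℕ} (hk : k ≤ t) (ω : ℕ → Fin N) (j : Fin N) :
      P k (Function.update ω t j) = P k ω :=
    hP k fun i hi => Function.update_of_ne (hi.trans_le hk).ne _ _
  simp only [pathExpectation, LinearMap.coe_mk, AddHom.coe_mk]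
  rw [← (Fin.snocEquiv fun _ : Fin (t + 1) => Fin N).sum_comp, Fintype.sum_prod_type, sum_comm]
  refine sum_congr rfl fun s _ => ?_
  rw [mul_sum]
  refine sum_congr rfl fun j _ => ?_
  simp only [Fin.snocEquiv, Equiv.coe_fn_mk, padSeq_snoc, Fin.prod_univ_castSucc,
    Fin.snoc_castSucc, Fin.snoc_last, Fin.val_castSucc, Fin.val_last, update_eq le_rfl,
    update_eq (Fin.is_lt _).le, mul_assoc]

lemma pathExpectation_mono (hP : ∀ t ω j, 0 ≤ P t ω j) (t : ℕ) {X Y : (ℕ → Fin N) → ℝ}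
    (hXY : X ≤ Y) : pathExpectation hN P t X ≤ pathExpectation hN P t Y :=
  sum_le_sum fun _ _ => mul_le_mul_of_nonneg_left (hXY _) (prod_nonneg fun _ _ => hP _ _ _)

lemma pathExpectation_const (hP : ∀ t, DependsOn (P t) (Set.Iio t))
    (hsum : ∀ t ω, ∑ j, P t ω j = 1) (t : ℕ) (c : ℝ) :
    pathExpectation hN P t (fun _ => c) = c := by
  induction t with
  | zero => exact pathExpectation_zero hN _
  | succ t ih => simpa only [pathExpectation_succ hN hP, ← sum_mul, hsum, one_mul] using ih

lemma sum_pathExpectation_le_of_drift (hP : ∀ t, DependsOn (P t) (Set.Iio t))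
    (hsimplex : ∀ t ω, P t ω ∈ stdSimplex ℝ (Fin N)) {V D : ℕ → (ℕ → Fin N) → ℝ} {c : ℝ}
    (hdrift : ∀ t ω, ∑ i, P t ω i * V (t + 1) (Function.update ω t i) ≤ V t ω - D t ω + c)
    (T : ℕ) :
    ∑ t ∈ range T, pathExpectation hN P t (D t) ≤
      pathExpectation hN P 0 (V 0) - pathExpectation hN P T (V T) + T * c := by
  have step (t : ℕ) : pathExpectation hN P (t + 1) (V (t + 1)) ≤
      pathExpectation hN P t (V t) - pathExpectation hN P t (D t) + c :=
    calc pathExpectation hN P (t + 1) (V (t + 1))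
        = pathExpectation hN P t fun ω => ∑ i, P t ω i * V (t + 1) (Function.update ω t i) :=
          pathExpectation_succ hN hP t _
      _ ≤ pathExpectation hN P t (V t - D t + fun _ => c) :=
          pathExpectation_mono hN (fun t ω => (hsimplex t ω).1) t (hdrift t)
      _ = pathExpectation hN P t (V t) - pathExpectation hN P t (D t) + c := by
          rw [map_add, map_sub, pathExpectation_const hN hP fun t ω => (hsimplex t ω).2]
  induction T with
  | zero => simp
  | succ T ih =>
    rw [sum_range_succ]
    push_cast
    linarith [step T]

end PathExpectation

/-- `Θ` and `P` are the iterates and the sampling distributions of MR-SGD for the losses `l`, with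
step size `α`, multiplicative-weights step size `η` and initial point `θ₀`, as functions of the
index sequence. -/
structure IsMRSGD {ι E : Type*} [Fintype ι] [NormedAddCommGroup E] [InnerProductSpace ℝ E]
    [CompleteSpace E] (l : ι → E → ℝ) (α η : ℝ) (θ₀ : E) (Θ : ℕ → (ℕ → ι) → E)
    (P : ℕ → (ℕ → ι) → ι → ℝ) : Prop where
  iterate_zero : ∀ ω, Θ 0 ω = θ₀
  iterate_succ : ∀ t ω, Θ (t + 1) ω = Θ t ω - α • gradient (l (ω t)) (Θ t ω)
  weights_zero : ∀ ω j, P 0 ω j = 1 / Fintype.card ι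
  weights_succ : ∀ t ω, P (t + 1) ω = gibbsWeights η fun j => ∑ s ∈ Icc 1 (t + 1), l j (Θ s ω)

namespace IsMRSGD

section

variable {ι E : Type*} [Fintype ι] [NormedAddCommGroup E] [InnerProductSpace ℝ E]
  [CompleteSpace E] {l : ι → E → ℝ} {α η : ℝ} {θ₀ : E} {Θ : ℕ → (ℕ → ι) → E}
  {P : ℕ → (ℕ → ι) → ι → ℝ}

lemma weights_eq (h : IsMRSGD l α η θ₀ Θ P) (t : ℕ) (ω : ℕ → ι) :
    P t ω = gibbsWeights η fun j => ∑ s ∈ Icc 1 t, l j (Θ s ω) := by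
  cases t with
  | zero => funext j; simp [h.weights_zero, gibbsWeights]
  | succ t => exact h.weights_succ t ω

lemma dependsOn_iterate (h : IsMRSGD l α η θ₀ Θ P) (t : ℕ) : DependsOn (Θ t) (Set.Iio t) := by
  induction t with
  | zero => intro ω ω' _; rw [h.iterate_zero, h.iterate_zero]
  | succ t ih =>
    intro ω ω' hω
    rw [h.iterate_succ, h.iterate_succ, hω t t.lt_succ_self,
      ih.mono (Set.Iio_subset_Iio t.le_succ) hω]

lemma dependsOn_weights (h : IsMRSGD l α η θ₀ Θ P) (t : ℕ) : DependsOn (P t) (Set.Iio t) := by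
  intro ω ω' hω
  rw [h.weights_eq, h.weights_eq]
  congr 1
  funext j
  refine sum_congr rfl fun s hs => ?_
  rw [(h.dependsOn_iterate s).mono (Set.Iio_subset_Iio (mem_Icc.1 hs).2) hω]

variable [Nonempty ι]

lemma weights_mem_stdSimplex (h : IsMRSGD l α η θ₀ Θ P) (t : ℕ) (ω : ℕ → ι) :
    P t ω ∈ stdSimplex ℝ ι :=
  h.weights_eq t ω ▸ gibbsWeights_mem_stdSimplex _ _

lemma mixedLoss_weights_succ_le (h : IsMRSGD l α η θ₀ Θ P) (hη : 0 ≤ η) (t : ℕ) (ω : ℕ → ι) :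
    mixedLoss l (P (t + 1) ω) (Θ (t + 1) ω) ≤ mixedLoss l (P t ω) (Θ (t + 1) ω) := by
  have cumulative_succ : (fun j => ∑ s ∈ Icc 1 (t + 1), l j (Θ s ω)) =
      (fun j => ∑ s ∈ Icc 1 t, l j (Θ s ω)) + fun j => l j (Θ (t + 1) ω) := by
    funext j
    exact sum_Icc_succ_top (Nat.le_add_left 1 t) _
  rw [h.weights_eq, h.weights_eq, cumulative_succ]
  exact sum_gibbsWeights_add_mul_le hη _ _

lemma sum_weights_mul_mixedLoss_succ_le (h : IsMRSGD l α η θ₀ Θ P) {β G : ℝ} (hβ : 0 ≤ β)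
    (hη : 0 ≤ η) (hdiff : ∀ j, Differentiable ℝ (l j))
    (hsmooth : ∀ j x y, ‖gradient (l j) x - gradient (l j) y‖ ≤ β * ‖x - y‖)
    (hgrad : ∀ j x, ‖gradient (l j) x‖ ≤ G) (t : ℕ) (ω : ℕ → ι) :
    ∑ i, P t ω i * mixedLoss l (P (t + 1) (Function.update ω t i))
        (Θ (t + 1) (Function.update ω t i)) ≤
      mixedLoss l (P t ω) (Θ t ω) - α * ‖gradient (mixedLoss l (P t ω)) (Θ t ω)‖ ^ 2 +
        β / 2 * (α ^ 2 * G ^ 2) := by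
  have hp := h.weights_mem_stdSimplex t ω
  refine le_trans (sum_le_sum fun i _ => mul_le_mul_of_nonneg_left ?_ (hp.1 i))
    (sum_mul_mixedLoss_sub_smul_gradient_le hβ hp hdiff hsmooth (hgrad · _) α)
  have past_eq : ∀ k ∈ Set.Iio t, Function.update ω t i k = ω k := fun k hk =>
    Function.update_of_ne hk.ne _ _
  have next_iterate : Θ (t + 1) (Function.update ω t i) =
      Θ t ω - α • gradient (l i) (Θ t ω) := by
    rw [h.iterate_succ, h.dependsOn_iterate t past_eq, Function.update_self]
  have reweight := h.mixedLoss_weights_succ_le hη t (Function.update ω t i)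
  rw [next_iterate] at reweight ⊢
  rwa [h.dependsOn_weights t past_eq] at reweight

end

lemma mul_sum_pathExpectation_le {N : ℕ} (hN : 0 < N) {E : Type*} [NormedAddCommGroup E]
    [InnerProductSpace ℝ E] [CompleteSpace E] {l : Fin N → E → ℝ} {α η : ℝ} {θ₀ : E}
    {Θ : ℕ → (ℕ → Fin N) → E} {P : ℕ → (ℕ → Fin N) → Fin N → ℝ} (h : IsMRSGD l α η θ₀ Θ P)
    {β G B : ℝ} (hβ : 0 ≤ β) (hη : 0 ≤ η) (hdiff : ∀ j, Differentiable ℝ (l j))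
    (hsmooth : ∀ j x y, ‖gradient (l j) x - gradient (l j) y‖ ≤ β * ‖x - y‖)
    (hgrad : ∀ j x, ‖gradient (l j) x‖ ≤ G) (hnonneg : ∀ j x, 0 ≤ l j x)
    (hinit : ∀ j, l j θ₀ ≤ B) (T : ℕ) :
    α * ∑ t ∈ range T, pathExpectation hN P t
        (fun ω => ‖gradient (mixedLoss l (P t ω)) (Θ t ω)‖ ^ 2) ≤
      B + T * (β / 2 * (α ^ 2 * G ^ 2)) := by
  have : Nonempty (Fin N) := ⟨⟨0, hN⟩⟩
  have telescoped := sum_pathExpectation_le_of_drift hN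
    (V := fun t ω => mixedLoss l (P t ω) (Θ t ω))
    (D := fun t => α • fun ω => ‖gradient (mixedLoss l (P t ω)) (Θ t ω)‖ ^ 2)
    h.dependsOn_weights h.weights_mem_stdSimplex
    (h.sum_weights_mul_mixedLoss_succ_le hβ hη hdiff hsmooth hgrad) T
  have initial_le :
      pathExpectation hN P 0 (fun ω => mixedLoss l (P 0 ω) (Θ 0 ω)) ≤ B := by
    rw [pathExpectation_zero, h.iterate_zero]
    exact mixedLoss_le (h.weights_mem_stdSimplex 0 _) hinit
  have final_nonneg :
      0 ≤ pathExpectation hN P T (fun ω => mixedLoss l (P T ω) (Θ T ω)) := by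
    rw [← map_zero (pathExpectation hN P T)]
    exact pathExpectation_mono hN (fun t ω => (h.weights_mem_stdSimplex t ω).1) T
      fun ω => mixedLoss_nonneg (h.weights_mem_stdSimplex T ω).1 (hnonneg · _)
  simp only [map_smul, smul_eq_mul, ← mul_sum] at telescoped
  linarith

end IsMRSGD

lemma div_le_mul_sqrt_of_sqrt_step_mul_le {β G B T S : ℝ} (hβ : 0 < β) (hG : 0 < G) (hB : 0 < B)
    (hT : 0 < T)
    (hS : √(2 * B / (G ^ 2 * β * T)) * S ≤
      B + T * (β / 2 * (√(2 * B / (G ^ 2 * β * T)) ^ 2 * G ^ 2))) :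
    S / T ≤ G * √(2 * β * B / T) := by
  set α := √(2 * B / (G ^ 2 * β * T))
  have α_pos : 0 < α := sqrt_pos.2 (by positivity)
  have α_sq : α ^ 2 = 2 * B / (G ^ 2 * β * T) := sq_sqrt (by positivity)
  have sqrt_eq : √(2 * β * B / T) = G * β * α := by
    rw [sqrt_eq_iff_eq_sq (by positivity) (by positivity), mul_pow, α_sq]
    field_simp
  have balance : T * (G ^ 2 * β * α ^ 2) = 2 * B := by
    rw [α_sq]
    field_simp
  rw [sqrt_eq, div_le_iff₀ hT]
  refine le_of_mul_le_mul_left ?_ α_pos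
  linarith

theorem mr_sgd_convergence_general {N : ℕ} (hN : 0 < N) {E : Type*} [NormedAddCommGroup E]
    [InnerProductSpace ℝ E] [CompleteSpace E] {l : Fin N → E → ℝ} {β G B η : ℝ} (hβ : 0 < β)
    (hG : 0 < G) (hB : 0 < B) (hη : 0 ≤ η) {T : ℕ} (hT : 1 ≤ T)
    (hdiff : ∀ i, Differentiable ℝ (l i))
    (hsmooth : ∀ i x y, ‖gradient (l i) x - gradient (l i) y‖ ≤ β * ‖x - y‖)
    (hlip : ∀ i x y, |l i x - l i y| ≤ G * ‖x - y‖) (hnonneg : ∀ i x, 0 ≤ l i x) {θ₀ : E}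
    (hinit : ∀ i, l i θ₀ ≤ B) {Θ : ℕ → (ℕ → Fin N) → E} {P : ℕ → (ℕ → Fin N) → Fin N → ℝ}
    (h : IsMRSGD l (√(2 * B / (G ^ 2 * β * T))) η θ₀ Θ P) :
    (1 / (T : ℝ)) * ∑ t ∈ range T,
        pathExpectation hN P t (fun ω => ‖∑ j, P t ω j • gradient (l j) (Θ t ω)‖ ^ 2) ≤
      G * √(2 * β * B / T) := by
  have descent := h.mul_sum_pathExpectation_le hN hβ.le hη hdiff hsmooth
    (fun i => norm_gradient_le_of_lipschitz hG.le (hlip i)) hnonneg hinit T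
  simp only [gradient_mixedLoss fun j => hdiff j _] at descent
  rw [one_div_mul_eq_div]
  exact div_le_mul_sqrt_of_sqrt_step_mul_le hβ hG hB (Nat.cast_pos.2 hT) descent

/-- Convergence of MR with SGD sampling according to pₜ
(Theorem 2 of the paper). With β-smooth, G-Lipschitz, B-bounded losses and
step size α = √(2B/(G²βT)), the time average of the expected squared norms of
the weighted gradients ∇F(θₜ, pₜ) is at most G√(2βB/T); the expectation over
the sampled indices i₀, …, i_{t−1} is the finite sum over all index sequences
weighted by the product of the sampling probabilities. -/
theorem mr_sgd_convergence
    {N d : ℕ} (hN : 0 < N) (hd : 1 ≤ d)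
    (l : Fin N → EuclideanSpace ℝ (Fin d) → ℝ)
    (β G B η : ℝ) (hβ : 0 < β) (hG : 0 < G) (hB : 0 < B) (hη : 0 < η)
    (T : ℕ) (hT : 1 ≤ T)
    (hdiff : ∀ i, Differentiable ℝ (l i))
    (hsmooth : ∀ i, ∀ x y : EuclideanSpace ℝ (Fin d),
      ‖gradient (l i) x - gradient (l i) y‖ ≤ β * ‖x - y‖)
    (hlip : ∀ i, ∀ x y : EuclideanSpace ℝ (Fin d),
      |l i x - l i y| ≤ G * ‖x - y‖)
    (hbdd : ∀ i, ∀ x : EuclideanSpace ℝ (Fin d), 0 ≤ l i x ∧ l i x ≤ B)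
    (θ0 : EuclideanSpace ℝ (Fin d))
    -- the trajectory of parameters and distributions as a function of the
    -- realized index sequence
    (Θ : ℕ → (ℕ → Fin N) → EuclideanSpace ℝ (Fin d))
    (P : ℕ → (ℕ → Fin N) → Fin N → ℝ)
    (hΘ0 : ∀ ω, Θ 0 ω = θ0)
    (hP0 : ∀ ω j, P 0 ω j = 1 / N)
    (hΘ : ∀ t ω, Θ (t + 1) ω =
      Θ t ω - Real.sqrt (2 * B / (G ^ 2 * β * T)) • gradient (l (ω t)) (Θ t ω))
    (hP : ∀ t ω j, P (t + 1) ω j =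
      Real.exp (-η * ∑ s ∈ Finset.Icc 1 (t + 1), l j (Θ s ω)) /
        ∑ k, Real.exp (-η * ∑ s ∈ Finset.Icc 1 (t + 1), l k (Θ s ω))) :
    (1 / (T : ℝ)) * ∑ t ∈ Finset.range T,
        (∑ s : Fin t → Fin N,
          (∏ k : Fin t, P k (padSeq hN s) (s k)) *
            ‖∑ j, P t (padSeq hN s) j • gradient (l j) (Θ t (padSeq hN s))‖ ^ 2) ≤
      G * Real.sqrt (2 * β * B / T) := by
  exact mr_sgd_convergence_general hN hβ hG hB hη.le hT hdiff hsmooth hlip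
    (fun i x => (hbdd i x).1) (fun i => (hbdd i θ0).2)
    ⟨hΘ0, hΘ, by simpa using hP0, fun t ω => funext (hP t ω)⟩
end

section
/- In the noisy linear MR-LS dynamics, after the first multiplicative-weights update every clean example receives more than uniform probability: for every clean index i ∉ I_cr, p_{1,i} ≥ 1 / ( N (1 + σ (exp(−η ε² Δ) − 1)) ) > 1/N. -/
open Real Finset

/-!
Since `x i = ±1`, the estimate satisfies `θ t - 1 = ∑ i, p t i * x i * e i`, so it errs by at most
`ε` times the weight of the corrupted examples. As long as that weight is at most `1 / 2 - Δ`, each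
round costs a corrupted example at least `ε ^ 2 * Δ` more than a clean one, while all clean examples
pay the same. Exponential weighting then leaves every clean example with at least uniform weight,
so the corrupted weight never exceeds `σ ≤ 1 / 2 - Δ` and the argument repeats: after `t` rounds
the gap in cumulative loss is at least `t * (ε ^ 2 * Δ)`.
-/

section GibbsWeight

variable {ι : Type*} [Fintype ι]

/-- The exponential (multiplicative-weights) probability of example `i` under the losses `L` with
step size `η`. -/
noncomputable def gibbsWeight (η : ℝ) (L : ι → ℝ) (i : ι) : ℝ :=
  exp (-η * L i) / ∑ j, exp (-η * L j)

variable {η : ℝ} {L : ι → ℝ}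

lemma gibbsWeight_nonneg (i : ι) : 0 ≤ gibbsWeight η L i := by
  unfold gibbsWeight
  positivity

lemma sum_gibbsWeight [Nonempty ι] : ∑ i, gibbsWeight η L i = 1 := by
  have hpos : 0 < ∑ j, exp (-η * L j) := sum_pos (fun j _ ↦ exp_pos _) univ_nonempty
  simp only [gibbsWeight]
  rw [← sum_div, div_self hpos.ne']

lemma gibbsWeight_eq_one_div_sum_exp_sub (i : ι) :
    gibbsWeight η L i = 1 / ∑ j, exp (-η * (L j - L i)) := by
  simp only [gibbsWeight, mul_sub, exp_sub]
  rw [← sum_div, one_div_div]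

lemma one_div_le_gibbsWeight {S : Finset ι} {i : ι} {g : ℝ} (hη : 0 ≤ η)
    (hL : ∀ j ∉ S, L i ≤ L j) (hgap : ∀ j ∈ S, L i + g ≤ L j) :
    1 / (Fintype.card ι + #S * (exp (-η * g) - 1)) ≤ gibbsWeight η L i := by
  classical
  have hpos : 0 < ∑ j, exp (-η * (L j - L i)) := sum_pos (fun j _ ↦ exp_pos _) ⟨i, mem_univ i⟩
  have hterm (j : ι) :
      exp (-η * (L j - L i)) ≤ 1 + if j ∈ S then exp (-η * g) - 1 else 0 := by
    split_ifs with hj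
    · rw [add_sub_cancel, exp_le_exp]
      nlinarith [hgap j hj]
    · rw [add_zero, exp_le_one_iff]
      nlinarith [hL j hj]
  rw [gibbsWeight_eq_one_div_sum_exp_sub]
  refine one_div_le_one_div_of_le hpos ?_
  calc ∑ j, exp (-η * (L j - L i))
      ≤ ∑ j, (1 + if j ∈ S then exp (-η * g) - 1 else 0) := sum_le_sum fun j _ ↦ hterm j
    _ = Fintype.card ι + #S * (exp (-η * g) - 1) := by simp [sum_add_distrib, mul_sub_one]

lemma sum_gibbsWeight_le_card_div [Nonempty ι] {S : Finset ι} (hη : 0 ≤ η)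
    (hL : ∀ i ∉ S, ∀ j, L i ≤ L j) :
    ∑ i ∈ S, gibbsWeight η L i ≤ #S / Fintype.card ι := by
  classical
  have huniform (i : ι) (hi : i ∈ Sᶜ) : 1 / (Fintype.card ι : ℝ) ≤ gibbsWeight η L i := by
    simpa using one_div_le_gibbsWeight (S := ∅) (g := 0) hη (fun j _ ↦ hL i (mem_compl.1 hi) j)
  have hcompl : #Sᶜ * (1 / (Fintype.card ι : ℝ)) ≤ ∑ i ∈ Sᶜ, gibbsWeight η L i := by
    simpa using card_nsmul_le_sum Sᶜ _ _ huniform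
  have htotal : ∑ i ∈ S, gibbsWeight η L i + ∑ i ∈ Sᶜ, gibbsWeight η L i = 1 := by
    rw [sum_add_sum_compl, sum_gibbsWeight]
  have hcard : (#S + #Sᶜ : ℝ) = Fintype.card ι := mod_cast card_add_card_compl S
  calc ∑ i ∈ S, gibbsWeight η L i ≤ 1 - #Sᶜ * (1 / (Fintype.card ι : ℝ)) := by linarith
    _ = #S / Fintype.card ι := by
      rw [← hcard]
      have : (#S + #Sᶜ : ℝ) ≠ 0 := by simp [hcard]
      field_simp
      ring

end GibbsWeight

section SquaredLoss

lemma abs_sum_mul_sub_one_le {ι : Type*} [Fintype ι] {S : Finset ι} {w x e : ι → ℝ} {ε : ℝ}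
    (hw : ∀ i, 0 ≤ w i) (hw_sum : ∑ i, w i = 1) (hx : ∀ i, |x i| = 1)
    (he : ∀ i ∈ S, |e i| ≤ ε) (he_compl : ∀ i ∉ S, e i = 0) :
    |∑ i, w i * x i * (x i + e i) - 1| ≤ ε * ∑ i ∈ S, w i := by
  have hx_sq (i : ι) : x i ^ 2 = 1 := by rw [← sq_abs, hx, one_pow]
  have herr : ∑ i, w i * x i * (x i + e i) - 1 = ∑ i ∈ S, w i * (x i * e i) := by
    rw [← hw_sum, ← sum_sub_distrib, ← sum_subset S.subset_univ]
    · exact sum_congr rfl fun i _ ↦ by linear_combination w i * hx_sq i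
    · intro i _ hi
      linear_combination w i * hx_sq i + w i * x i * he_compl i hi
  rw [herr, mul_sum]
  refine (abs_sum_le_sum_abs _ _).trans (sum_le_sum fun i hi ↦ ?_)
  rw [abs_mul, abs_mul, hx, one_mul, abs_of_nonneg (hw i), mul_comm ε]
  exact mul_le_mul_of_nonneg_left (he i hi) (hw i)

lemma half_sq_add_le_half_sq_residual {θ x e Δ : ℝ} (hx : |x| = 1)
    (hθ : |θ - 1| ≤ (1 / 2 - Δ) * |e|) :
    1 / 2 * (θ - 1) ^ 2 + e ^ 2 * Δ ≤ 1 / 2 * (θ * x - (x + e)) ^ 2 := by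
  have hx_sq : x ^ 2 = 1 := by rw [← sq_abs, hx, one_pow]
  have hcross : (θ - 1) * x * e ≤ (1 / 2 - Δ) * e ^ 2 :=
    calc (θ - 1) * x * e ≤ |(θ - 1) * x * e| := le_abs_self _
      _ = |θ - 1| * |e| := by rw [abs_mul, abs_mul, hx, mul_one]
      _ ≤ (1 / 2 - Δ) * |e| * |e| := mul_le_mul_of_nonneg_right hθ (abs_nonneg e)
      _ = (1 / 2 - Δ) * e ^ 2 := by rw [mul_assoc, abs_mul_abs_self, sq]
  calc 1 / 2 * (θ - 1) ^ 2 + e ^ 2 * Δ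
      ≤ 1 / 2 * (θ - 1) ^ 2 - (θ - 1) * x * e + 1 / 2 * e ^ 2 := by linarith
    _ = 1 / 2 * (θ * x - (x + e)) ^ 2 := by linear_combination -(1 / 2) * (θ - 1) ^ 2 * hx_sq

/-- The squared loss of example `i` accumulated by the estimates `θ 0, …, θ (t - 1)` against the
observed labels `z`. -/
noncomputable def cumulativeLoss {ι : Type*} (x z : ι → ℝ) (θ : ℕ → ℝ) (t : ℕ) (i : ι) : ℝ :=
  ∑ s ∈ range t, (1 / 2) * (θ s * x i - z i) ^ 2

lemma cumulativeLoss_succ {ι : Type*} (x z : ι → ℝ) (θ : ℕ → ℝ) (t : ℕ) (i : ι) :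
    cumulativeLoss x z θ (t + 1) i =
      cumulativeLoss x z θ t i + 1 / 2 * (θ t * x i - z i) ^ 2 :=
  sum_range_succ _ t

lemma cumulativeLoss_of_label_eq {ι : Type*} {x z : ι → ℝ} {i : ι} (θ : ℕ → ℝ) (t : ℕ)
    (hx : |x i| = 1) (hz : z i = x i) :
    cumulativeLoss x z θ t i = ∑ s ∈ range t, 1 / 2 * (θ s - 1) ^ 2 := by
  have hx_sq : x i ^ 2 = 1 := by rw [← sq_abs, hx, one_pow]
  refine sum_congr rfl fun s _ ↦ ?_
  rw [hz]
  linear_combination 1 / 2 * (θ s - 1) ^ 2 * hx_sq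

end SquaredLoss

/-- The MR-LS dynamics with step size `η` on features `x` and observed labels `z`: `p t` is the
distribution over examples and `θ t` the estimate at round `t`. The estimate is the weighted
least-squares solution only for features in `{-1, 1}`. -/
structure IsMRLSDynamics {ι : Type*} [Fintype ι] (η : ℝ) (x z : ι → ℝ) (p : ℕ → ι → ℝ)
    (θ : ℕ → ℝ) : Prop where
  init : ∀ i, p 0 i = 1 / Fintype.card ι
  estimate : ∀ t, θ t = ∑ i, p t i * x i * z i
  update : ∀ t i, p (t + 1) i = gibbsWeight η (cumulativeLoss x z θ (t + 1)) i

namespace IsMRLSDynamics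

variable {ι : Type*} [Fintype ι] {η ε Δ : ℝ} {x z e : ι → ℝ} {p : ℕ → ι → ℝ} {θ : ℕ → ℝ}
  {S : Finset ι}

lemma weight_eq_gibbsWeight (h : IsMRLSDynamics η x z p θ) (t : ℕ) :
    p t = gibbsWeight η (cumulativeLoss x z θ t) := by
  ext i
  cases t with
  | zero => simp [h.init, gibbsWeight, cumulativeLoss]
  | succ t => exact h.update t i

lemma abs_estimate_sub_one_le [Nonempty ι] (h : IsMRLSDynamics η x (fun i ↦ x i + e i) p θ)
    (hx : ∀ i, |x i| = 1) (he : ∀ i ∈ S, |e i| ≤ ε) (he_compl : ∀ i ∉ S, e i = 0) (t : ℕ) :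
    |θ t - 1| ≤ ε * ∑ i ∈ S, p t i := by
  rw [h.estimate, h.weight_eq_gibbsWeight]
  exact abs_sum_mul_sub_one_le gibbsWeight_nonneg sum_gibbsWeight hx he he_compl

lemma cumulativeLoss_gap (h : IsMRLSDynamics η x (fun i ↦ x i + e i) p θ) (hη : 0 ≤ η)
    (hΔ : 0 ≤ Δ) (hcard : #S ≤ (1 / 2 - Δ) * Fintype.card ι) (hx : ∀ i, |x i| = 1)
    (he : ∀ i ∈ S, |e i| = ε) (he_compl : ∀ i ∉ S, e i = 0) (t : ℕ) {j : ι} (hj : j ∈ S) :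
    ∑ s ∈ range t, 1 / 2 * (θ s - 1) ^ 2 + t * (ε ^ 2 * Δ) ≤
      cumulativeLoss x (fun i ↦ x i + e i) θ t j := by
  have : Nonempty ι := ⟨j⟩
  induction t generalizing j with
  | zero => simp [cumulativeLoss]
  | succ t ih =>
    have hclean (i : ι) (hi : i ∉ S) (k : ι) : cumulativeLoss x (fun i ↦ x i + e i) θ t i ≤
        cumulativeLoss x (fun i ↦ x i + e i) θ t k := by
      rw [cumulativeLoss_of_label_eq θ t (hx i) (by simp [he_compl i hi])]
      by_cases hk : k ∈ S
      · exact (le_add_of_nonneg_right (by positivity)).trans (ih hk)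
      · rw [cumulativeLoss_of_label_eq θ t (hx k) (by simp [he_compl k hk])]
    have hmass : ∑ i ∈ S, p t i ≤ 1 / 2 - Δ := by
      rw [h.weight_eq_gibbsWeight]
      refine (sum_gibbsWeight_le_card_div hη hclean).trans ?_
      rwa [div_le_iff₀ (mod_cast Fintype.card_pos)]
    have hθ : |θ t - 1| ≤ (1 / 2 - Δ) * |e j| := by
      refine (h.abs_estimate_sub_one_le hx (fun i hi ↦ (he i hi).le) he_compl t).trans ?_
      rw [← he j hj, mul_comm]
      exact mul_le_mul_of_nonneg_right hmass (abs_nonneg _)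
    have hround := half_sq_add_le_half_sq_residual (hx j) hθ
    rw [← sq_abs (e j), he j hj] at hround
    rw [cumulativeLoss_succ, sum_range_succ]
    push_cast
    linarith [ih hj]

lemma one_div_le_weight (h : IsMRLSDynamics η x (fun i ↦ x i + e i) p θ) (hη : 0 ≤ η)
    (hΔ : 0 ≤ Δ) (hcard : #S ≤ (1 / 2 - Δ) * Fintype.card ι) (hx : ∀ i, |x i| = 1)
    (he : ∀ i ∈ S, |e i| = ε) (he_compl : ∀ i ∉ S, e i = 0) (t : ℕ) {i : ι} (hi : i ∉ S) :
    1 / (Fintype.card ι + #S * (exp (-η * (t * (ε ^ 2 * Δ))) - 1)) ≤ p t i := by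
  have hloss {j : ι} (hj : j ∉ S) : cumulativeLoss x (fun i ↦ x i + e i) θ t j =
      ∑ s ∈ range t, 1 / 2 * (θ s - 1) ^ 2 :=
    cumulativeLoss_of_label_eq θ t (hx j) (by simp [he_compl j hj])
  rw [h.weight_eq_gibbsWeight]
  refine one_div_le_gibbsWeight hη (fun j hj ↦ ?_) (fun j hj ↦ ?_)
  · rw [hloss hi, hloss hj]
  · rw [hloss hi]
    exact h.cumulativeLoss_gap hη hΔ hcard hx he he_compl t hj

end IsMRLSDynamics

lemma one_div_lt_one_div_mul_one_add {n σ q : ℝ} (hn : 0 < n) (hσ : 0 < σ) (hσ_le : σ ≤ 1)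
    (hq : 0 < q) (hq_lt : q < 1) : 1 / n < 1 / (n * (1 + σ * (q - 1))) := by
  have hfactor_pos : 0 < 1 + σ * (q - 1) := by nlinarith
  have hfactor_lt : 1 + σ * (q - 1) < 1 := by nlinarith
  exact one_div_lt_one_div_of_lt (by positivity) (mul_lt_of_lt_one_right hn hfactor_lt)

theorem mr_ls_first_update_clean_probability_general {ι : Type*} [Fintype ι] {ε Δ η σ : ℝ}
    (hε : 0 < ε) (hΔ : 0 < Δ) (hη : 0 < η) (hσ : 0 < σ) (hσ_le : σ ≤ 1 / 2 - Δ)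
    {S : Finset ι} (hcard : #S = σ * Fintype.card ι) {x e : ι → ℝ} {p : ℕ → ι → ℝ} {θ : ℕ → ℝ}
    (hx : ∀ i, |x i| = 1) (he : ∀ i ∈ S, |e i| = ε) (he_compl : ∀ i ∉ S, e i = 0)
    (h : IsMRLSDynamics η x (fun i ↦ x i + e i) p θ) {t : ℕ} (ht : 0 < t) {i : ι} (hi : i ∉ S) :
    p t i ≥ 1 / (Fintype.card ι * (1 + σ * (exp (-η * ε ^ 2 * Δ * t) - 1))) ∧
      1 / (Fintype.card ι * (1 + σ * (exp (-η * ε ^ 2 * Δ * t) - 1))) >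
        1 / (Fintype.card ι : ℝ) := by
  have hexp : -η * (t * (ε ^ 2 * Δ)) = -η * ε ^ 2 * Δ * t := by ring
  constructor
  · have hcard_le : #S ≤ (1 / 2 - Δ) * Fintype.card ι := hcard ▸ by gcongr
    have hweight := h.one_div_le_weight hη.le hΔ.le hcard_le hx he he_compl t hi
    rw [hcard, hexp] at hweight
    convert hweight using 2
    ring
  · have hn : 0 < (Fintype.card ι : ℝ) := mod_cast Fintype.card_pos_iff.2 ⟨i⟩
    refine one_div_lt_one_div_mul_one_add hn hσ (by linarith) (exp_pos _) ?_
    rw [exp_lt_one_iff, ← hexp, neg_mul, neg_lt_zero]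
    positivity

/-- In the noisy linear MR-LS dynamics, after the first
multiplicative-weights update every clean example receives more than uniform
probability: p_{1,i} ≥ 1/(N(1 + σ(exp(−ηε²Δ) − 1))) > 1/N
(Lemma in the supplementary material). -/
theorem mr_ls_first_update_clean_probability
    (N : ℕ) (hN : 1 ≤ N)
    (ε Δ η : ℝ) (hε : 0 < ε) (hΔ0 : 0 < Δ) (hΔ : Δ < 1 / 2) (hη : 0 < η)
    (σ : ℝ) (hσ : σ = 1 / 2 - Δ)
    (Icr : Finset (Fin N)) (hIcr_pos : 0 < Icr.card) (hIcr_card : (Icr.card : ℝ) = σ * N)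
    (x y e : Fin N → ℝ)
    (hx : ∀ i, x i = 1 ∨ x i = -1) (hxy : ∀ i, y i = x i)
    (he_cr : ∀ i ∈ Icr, e i = ε ∨ e i = -ε) (he_cl : ∀ i ∉ Icr, e i = 0)
    (p : ℕ → Fin N → ℝ) (θ : ℕ → ℝ)
    (hp0 : ∀ i, p 0 i = 1 / N)
    (hθ : ∀ t, θ t = ∑ i, p t i * x i * (y i + e i))
    (hp : ∀ t i, p (t + 1) i =
      Real.exp (-η * ∑ s ∈ Finset.range (t + 1), (1 / 2) * (θ s * x i - (y i + e i)) ^ 2) /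
        ∑ j, Real.exp (-η * ∑ s ∈ Finset.range (t + 1), (1 / 2) * (θ s * x j - (y j + e j)) ^ 2))
    :
    ∀ i ∉ Icr,
      p 1 i ≥ 1 / (N * (1 + σ * (Real.exp (-η * ε ^ 2 * Δ) - 1))) ∧
      1 / (N * (1 + σ * (Real.exp (-η * ε ^ 2 * Δ) - 1))) > 1 / N := by
  intro i hi
  obtain rfl : y = x := funext hxy
  have hdyn : IsMRLSDynamics η y (fun i ↦ y i + e i) p θ := ⟨by simpa using hp0, hθ, hp⟩
  simpa using mr_ls_first_update_clean_probability_general hε hΔ0 hη (by linarith) hσ.le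
    (by simpa using hIcr_card) (fun i ↦ (abs_eq zero_le_one).2 (hx i))
    (fun i hi ↦ (abs_eq hε.le).2 (he_cr i hi)) he_cl hdyn one_pos hi
end
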